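/- arXiv:2003.06469 — 5 statements merged into one kernel-verified Lean document; each statement's English description precedes it below -/
import Mathlib

section
/- Let 𝒳 be a compact metrizable topological space, 𝕀 ⊂ ℝ an open set, and F : 𝒳 × 𝕀 → ℝ a continuous function that is differentiable in t ∈ 𝕀 for each fixed x, such that the partial derivative ∂ₜF is continuous on 𝒳 × 𝕀 and sup_{(x,t) ∈ 𝒳×𝕀} |∂ₜF(x,t)| < ∞. Define V(t) := min_{x ∈ 𝒳} F(x,t), and suppose that for every t ∈ 𝕀 there is a unique x*(t) ∈ 𝒳 with F(x*(t),t) = V(t). Then the map t ↦ x*(t) is continuous, V is continuously differentiable on 𝕀, and V'(t) = ∂ₜF(x*(t),t) for all t ∈ 𝕀. -/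
open Filter Topology

/-!
By compactness, the minimizers at parameters `s → t` have cluster points; joint continuity makes
each of them a minimizer at `t`, so uniqueness forces `x* s → x* t`. Comparing the minimizers at
`s` and `t` with each other then squeezes the value function between two increments of `F` with
`x` held fixed,
`F (x* s, s) - F (x* s, t) ≤ V s - V t ≤ F (x* t, s) - F (x* t, t)`.
Since `∂ₜF` is continuous at `(x* t, t)`, the first-order expansion of `F` in the parameter is
uniform for `x` near `x* t`, so both bounds are `∂ₜF (x* t, t) (s - t) + o(s - t)`.
-/

open Asymptotics Set

section Minimizers

variable {X T α : Type*} [TopologicalSpace X] [TopologicalSpace T] [TopologicalSpace α]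
  [Preorder α] [OrderClosedTopology α] {I : Set T} {F : X × T → α} {m : T → X} {t : T}

theorem le_of_mapClusterPt_of_eventually_le {x y : X}
    (hFx : ContinuousWithinAt F (univ ×ˢ I) (x, t))
    (hFy : ContinuousWithinAt F (univ ×ˢ I) (y, t))
    (hm : ∀ᶠ s in 𝓝[I] t, F (m s, s) ≤ F (y, s)) (hx : MapClusterPt x (𝓝[I] t) m) :
    F (x, t) ≤ F (y, t) := by
  obtain ⟨U, hU, hmU⟩ := mapClusterPt_iff_ultrafilter.1 hx
  have lift_tendsto {n : T → X} {z : X} (hn : Tendsto n U (𝓝 z)) :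
      Tendsto (fun s => (n s, s)) U (𝓝[univ ×ˢ I] (z, t)) := by
    rw [nhdsWithin_prod_eq, nhdsWithin_univ]
    exact hn.prodMk hU
  exact le_of_tendsto_of_tendsto (hFx.tendsto.comp (lift_tendsto hmU))
    (hFy.tendsto.comp (lift_tendsto tendsto_const_nhds)) (hU hm)

theorem continuousWithinAt_of_unique_minimizer [CompactSpace X]
    (hF : ∀ x, ContinuousWithinAt F (univ ×ˢ I) (x, t))
    (hm : ∀ᶠ s in 𝓝[I] t, ∀ x, F (m s, s) ≤ F (x, s))
    (huniq : ∀ x, F (x, t) ≤ F (m t, t) → x = m t) :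
    ContinuousWithinAt m I t :=
  tendsto_nhds_of_unique_mapClusterPt fun x hx =>
    huniq x <| le_of_mapClusterPt_of_eventually_le (hF x) (hF (m t))
      (hm.mono fun _ hs => hs (m t)) hx

end Minimizers

theorem isLittleO_of_le_of_le {α E : Type*} [Norm E] {l : Filter α} {f g h : α → ℝ} {k : α → E}
    (hf : f =o[l] k) (hh : h =o[l] k) (hfg : f ≤ᶠ[l] g) (hgh : g ≤ᶠ[l] h) : g =o[l] k := by
  refine .of_bound fun c hc => ?_
  filter_upwards [hf.bound hc, hh.bound hc, hfg, hgh] with x hfx hhx hle_g hg_le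
  exact (abs_le_max_abs_abs hle_g hg_le).trans (max_le hfx hhx)

section ParametricDerivative

variable {X E : Type*} [TopologicalSpace X] [NormedAddCommGroup E] [NormedSpace ℝ E]

theorem isLittleO_sub_sub_of_continuousAt_partial_fderiv {H : Type*} [NormedAddCommGroup H]
    [NormedSpace ℝ H] {F : X × E → H} {F' : X × E → E →L[ℝ] H} {x₀ : X} {t₀ : E}
    (hF : ∀ᶠ p in 𝓝 (x₀, t₀), HasFDerivAt (fun s => F (p.1, s)) (F' p) p.2)
    (hF' : ContinuousAt F' (x₀, t₀)) :
    (fun p => F p - F (p.1, t₀) - F' (x₀, t₀) (p.2 - t₀)) =o[𝓝 (x₀, t₀)] fun p => p.2 - t₀ := by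
  refine .of_bound fun ε hε => ?_
  have hclose : ∀ᶠ p in 𝓝 (x₀, t₀), ‖F' p - F' (x₀, t₀)‖ < ε := by
    simpa only [dist_eq_norm] using Metric.tendsto_nhds.1 hF' ε hε
  have hproj : Tendsto (fun q : (X × E) × E => (q.1.1, q.2)) (𝓝 (x₀, t₀) ×ˢ 𝓝 t₀)
      (𝓝 (x₀, t₀)) :=
    (continuousAt_fst.tendsto.comp tendsto_fst).prodMk_nhds tendsto_snd
  have hsegment :=
    (hproj.eventually (hF.and hclose)).segment_of_prod_nhds
      (r := fun p s => HasFDerivAt (fun s => F (p.1, s)) (F' (p.1, s)) s ∧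
        ‖F' (p.1, s) - F' (x₀, t₀)‖ < ε) tendsto_const_nhds continuousAt_snd.tendsto
  filter_upwards [hsegment] with p hp
  exact Convex.norm_image_sub_le_of_norm_hasFDerivWithin_le'
    (fun s hs => (hp s hs).1.hasFDerivWithinAt) (fun s hs => (hp s hs).2.le)
    (convex_segment t₀ p.2) (left_mem_segment ℝ t₀ p.2) (right_mem_segment ℝ t₀ p.2)

theorem hasFDerivAt_apply_minimizer {F : X × E → ℝ} {F' : X × E → E →L[ℝ] ℝ} {m : E → X} {t : E}
    (hF : ∀ᶠ p in 𝓝 (m t, t), HasFDerivAt (fun s => F (p.1, s)) (F' p) p.2)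
    (hF' : ContinuousAt F' (m t, t)) (hm : ContinuousAt m t)
    (hmin : ∀ᶠ s in 𝓝 t, ∀ x, F (m s, s) ≤ F (x, s)) :
    HasFDerivAt (fun s => F (m s, s)) (F' (m t, t)) t := by
  have hexpand := isLittleO_sub_sub_of_continuousAt_partial_fderiv hF hF'
  have hmoving : (fun s => F (m s, s) - F (m s, t) - F' (m t, t) (s - t)) =o[𝓝 t]
      fun s => s - t :=
    hexpand.comp_tendsto (hm.tendsto.prodMk_nhds tendsto_id)
  have hfixed : (fun s => F (m t, s) - F (m t, t) - F' (m t, t) (s - t)) =o[𝓝 t]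
      fun s => s - t :=
    hexpand.comp_tendsto (tendsto_const_nhds.prodMk_nhds tendsto_id)
  refine .of_isLittleO (isLittleO_of_le_of_le hmoving hfixed (.of_forall fun s => ?_) ?_)
  · exact sub_le_sub_right (sub_le_sub_left (hmin.self_of_nhds (m s)) _) _
  · filter_upwards [hmin] with s hs
    exact sub_le_sub_right (sub_le_sub_right (hs (m t)) _) _

end ParametricDerivative

theorem stmt_4_general {X E : Type*} [TopologicalSpace X] [CompactSpace X]
    [NormedAddCommGroup E] [NormedSpace ℝ E] {I : Set E} (hI : IsOpen I)
    {F : X × E → ℝ} {F' : X × E → E →L[ℝ] ℝ} (hF : ContinuousOn F (univ ×ˢ I))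
    (hF' : ∀ x, ∀ t ∈ I, HasFDerivAt (fun s => F (x, s)) (F' (x, t)) t)
    (hF'cont : ContinuousOn F' (univ ×ˢ I)) {V : E → ℝ} {xstar : E → X}
    (hmin : ∀ t ∈ I, IsLeast (range fun x => F (x, t)) (V t))
    (hstar : ∀ t ∈ I, F (xstar t, t) = V t)
    (huniq : ∀ t ∈ I, ∀ x, F (x, t) = V t → x = xstar t) :
    ContinuousOn xstar I ∧ (∀ t ∈ I, HasFDerivAt V (F' (xstar t, t)) t) ∧
      ContinuousOn (fun t => F' (xstar t, t)) I := by
  have hV_le : ∀ t ∈ I, ∀ x, V t ≤ F (x, t) := fun t ht x => (hmin t ht).2 (mem_range_self x)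
  have hstar_le : ∀ t ∈ I, ∀ x, F (xstar t, t) ≤ F (x, t) := fun t ht x =>
    (hstar t ht).trans_le (hV_le t ht x)
  have hcont : ContinuousOn xstar I := fun t ht =>
    continuousWithinAt_of_unique_minimizer (fun x => hF (x, t) ⟨mem_univ x, ht⟩)
      (eventually_mem_nhdsWithin.mono hstar_le)
      fun x hx => huniq t ht x ((hx.trans_eq (hstar t ht)).antisymm (hV_le t ht x))
  refine ⟨hcont, fun t ht => ?_,
    hF'cont.comp (hcont.prodMk continuousOn_id) fun t ht => ⟨mem_univ _, ht⟩⟩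
  have hI_nhds : I ∈ 𝓝 t := hI.mem_nhds ht
  have hprod_nhds : univ ×ˢ I ∈ 𝓝 (xstar t, t) := prod_mem_nhds univ_mem hI_nhds
  have hderiv := hasFDerivAt_apply_minimizer
    (eventually_of_mem hprod_nhds fun p hp => hF' p.1 p.2 hp.2)
    (hF'cont.continuousAt hprod_nhds) (hcont.continuousAt hI_nhds)
    (eventually_of_mem hI_nhds hstar_le)
  exact hderiv.congr_of_eventuallyEq (eventually_of_mem hI_nhds fun s hs => (hstar s hs).symm)

/-- **Theorem 5.7 (envelope theorem).** Let `𝒳` be a compact metrizable space, `I ⊆ ℝ` open,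
`F : 𝒳 × I → ℝ` continuous and differentiable in `t` with continuous, uniformly bounded partial
derivative `G = ∂ₜF`.  If `V t = min_{x ∈ 𝒳} F (x, t)` and the minimizer `x* t` is unique for
every `t ∈ I`, then `x*` is continuous, `V` is C¹ on `I` and `V' t = G (x* t, t)`. -/
theorem stmt_4 {X : Type*} [TopologicalSpace X] [CompactSpace X] [TopologicalSpace.MetrizableSpace X]
    [Nonempty X]
    (I : Set ℝ) (hI : IsOpen I)
    (F : X × ℝ → ℝ) (G : X × ℝ → ℝ)
    (hF : ContinuousOn F (Set.univ ×ˢ I))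
    (hG : ∀ x : X, ∀ t ∈ I, HasDerivAt (fun s => F (x, s)) (G (x, t)) t)
    (hGcont : ContinuousOn G (Set.univ ×ˢ I))
    (hGbdd : ∃ M : ℝ, ∀ x : X, ∀ t ∈ I, |G (x, t)| ≤ M)
    (V : ℝ → ℝ) (xstar : ℝ → X)
    (hmin : ∀ t ∈ I, IsLeast (Set.range fun x : X => F (x, t)) (V t))
    (hstar : ∀ t ∈ I, F (xstar t, t) = V t)
    (huniq : ∀ t ∈ I, ∀ x : X, F (x, t) = V t → x = xstar t) :
    ContinuousOn xstar I ∧ (∀ t ∈ I, HasDerivAt V (G (xstar t, t)) t) ∧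
      ContinuousOn (fun t => G (xstar t, t)) I := by
  let L : ℝ ≃L[ℝ] (ℝ →L[ℝ] ℝ) := ContinuousLinearMap.toSpanSingletonCLE
  exact (stmt_4_general hI hF (F' := L ∘ G) (fun x t ht => (hG x t ht).hasFDerivAt)
    (L.comp_continuousOn_iff.2 hGcont) hmin hstar huniq).imp_right
      (.imp id L.comp_continuousOn_iff.1)
end

section
/- Let n ≥ 1, R > 0, and let U = {x ∈ ℝⁿ : |x| ≥ R}. Let f, g : ℝⁿ → [0,∞) be nonnegative functions that are C² on a neighborhood of U, and let K, H : U → ℝ be measurable functions such that: (i) Δf(x) ≤ K(x)f(x) for all x ∈ U; (ii) Δg(x) ≥ H(x)g(x) for all x ∈ U; (iii) f(x) → 0 and g(x) → 0 as |x| → +∞; (iv) H(x) ≥ K(x) ≥ 0 for all x ∈ U; (v) f(x) ≥ g(x) for all x with |x| = R. Then f(x) ≥ g(x) for all x ∈ U. -/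
open MeasureTheory

/-- The Laplacian of `f : ℝⁿ → ℝ`, as the sum of the repeated directional derivatives
along the coordinate directions. -/
noncomputable def laplacian {n : ℕ} (f : EuclideanSpace ℝ (Fin n) → ℝ)
    (x : EuclideanSpace ℝ (Fin n)) : ℝ :=
  ∑ i : Fin n, fderiv ℝ (fun y => fderiv ℝ f y (EuclideanSpace.single i 1)) x
    (EuclideanSpace.single i 1)

/-!
Where `g > f` we have `Δg ≥ H g ≥ K g ≥ K f ≥ Δf`, so `g - f` is subharmonic there. For `b > 0` the
set `{x ∈ U | b ≤ g x - f x}` is compact because `g` vanishes at infinity, and `g - f ≤ b` on its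
frontier because `g ≤ f` on the frontier of `U`. The weak maximum principle, reduced to the strictly
subharmonic case by adding `ε ‖x‖ ^ 2`, gives `g - f ≤ b` on the whole set; let `b → 0`.
-/

open Filter Topology Set
open scoped InnerProductSpace Laplacian

section SecondDerivative

variable {𝕜 E F : Type*} [NontriviallyNormedField 𝕜] [NormedAddCommGroup E] [NormedSpace 𝕜 E]
  [NormedAddCommGroup F] [NormedSpace 𝕜 F]

theorem differentiableAt_fderiv_of_contDiffAt_two {u : E → F} {x : E} (hu : ContDiffAt 𝕜 2 u x) :
    DifferentiableAt 𝕜 (fderiv 𝕜 u) x :=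
  (hu.fderiv_right (m := 1) (by norm_num)).differentiableAt one_ne_zero

theorem deriv_deriv_comp_line_eq_iteratedFDeriv {u : E → F} {x : E} (hu : ContDiffAt 𝕜 2 u x)
    (e : E) : deriv (deriv fun t : 𝕜 => u (x + t • e)) 0 = iteratedFDeriv 𝕜 2 u x ![e, e] := by
  have hline (t : 𝕜) : HasDerivAt (fun s : 𝕜 => x + s • e) e t := by
    simpa using ((hasDerivAt_id t).smul_const e).const_add x
  have hline_tendsto : Tendsto (fun t : 𝕜 => x + t • e) (𝓝 0) (𝓝 x) := by
    simpa using (hline 0).continuousAt.tendsto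
  have hderiv : deriv (fun t : 𝕜 => u (x + t • e)) =ᶠ[𝓝 0] fun t => fderiv 𝕜 u (x + t • e) e := by
    filter_upwards [hline_tendsto.eventually (hu.eventually (by simp))] with t ht
    exact ((ht.differentiableAt two_ne_zero).hasFDerivAt.comp_hasDerivAt t (hline t)).deriv
  have hfderiv : HasDerivAt (fun t : 𝕜 => fderiv 𝕜 u (x + t • e)) (fderiv 𝕜 (fderiv 𝕜 u) x e) 0 :=
    (differentiableAt_fderiv_of_contDiffAt_two hu).hasFDerivAt.comp_hasDerivAt_of_eq 0 (hline 0)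
      (by simp)
  rw [hderiv.deriv_eq, (hfderiv.clm_apply (hasDerivAt_const 0 e)).deriv, iteratedFDeriv_two_apply]
  simp

theorem deriv_deriv_nonpos_of_isLocalMax {φ : ℝ → ℝ} {t : ℝ} (hmax : IsLocalMax φ t)
    (hφ : ContinuousAt φ t) : deriv (deriv φ) t ≤ 0 := by
  by_contra! hpos
  have hmin : IsLocalMin φ t := isLocalMin_of_deriv_deriv_pos hpos hmax.deriv_eq_zero hφ
  have hconst : φ =ᶠ[𝓝 t] fun _ => φ t := by
    filter_upwards [hmax, hmin] with s hle hge using le_antisymm hle hge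
  exact hpos.ne' (by simp [hconst.deriv.deriv_eq])

theorem iteratedFDeriv_two_self_nonpos_of_isLocalMax {E : Type*} [NormedAddCommGroup E]
    [NormedSpace ℝ E] {u : E → ℝ} {x : E} (hmax : IsLocalMax u x)
    (hu : ContDiffAt ℝ 2 u x) (e : E) : iteratedFDeriv ℝ 2 u x ![e, e] ≤ 0 := by
  have hline : Continuous fun t : ℝ => x + t • e := by fun_prop
  have hmax_line : IsLocalMax (fun t : ℝ => u (x + t • e)) 0 := by
    simpa [IsLocalMax, IsMaxFilter] using (hline.tendsto' 0 x (by simp)).eventually hmax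
  have hcont_line : ContinuousAt (fun t : ℝ => u (x + t • e)) 0 :=
    hu.continuousAt.comp_of_eq hline.continuousAt (by simp)
  rw [← deriv_deriv_comp_line_eq_iteratedFDeriv hu]
  exact deriv_deriv_nonpos_of_isLocalMax hmax_line hcont_line

end SecondDerivative

section Laplacian

variable {E : Type*} [NormedAddCommGroup E] [InnerProductSpace ℝ E] [FiniteDimensional ℝ E]

theorem laplacian_nonpos_of_isLocalMax {u : E → ℝ} {x : E} (hmax : IsLocalMax u x)
    (hu : ContDiffAt ℝ 2 u x) : Δ u x ≤ 0 := by
  rw [InnerProductSpace.laplacian_eq_iteratedFDeriv_stdOrthonormalBasis]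
  exact Finset.sum_nonpos fun i _ => iteratedFDeriv_two_self_nonpos_of_isLocalMax hmax hu _

theorem laplacian_norm_sq (x : E) :
    Δ (fun y : E => ‖y‖ ^ 2) x = 2 * Module.finrank ℝ E := by
  have hhess (e : E) : iteratedFDeriv ℝ 2 (fun y : E => ‖y‖ ^ 2) x ![e, e] = 2 * ‖e‖ ^ 2 := by
    have hlinear : fderiv ℝ (fun y : E => ‖y‖ ^ 2) =
        ((2 : ℝ) • innerSL ℝ : E →L[ℝ] E →L[ℝ] ℝ) := by
      ext
      simp
    rw [iteratedFDeriv_two_apply, hlinear, ContinuousLinearMap.fderiv,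
      ← real_inner_self_eq_norm_sq]
    rfl
  simp [InnerProductSpace.laplacian_eq_iteratedFDeriv_stdOrthonormalBasis, hhess, mul_comm]

theorem laplacian_eq_innerProductSpace_laplacian {n : ℕ} {u : EuclideanSpace ℝ (Fin n) → ℝ}
    {x : EuclideanSpace ℝ (Fin n)} (hu : ContDiffAt ℝ 2 u x) : laplacian u x = Δ u x := by
  rw [InnerProductSpace.laplacian_eq_iteratedFDeriv_orthonormalBasis u
    (EuclideanSpace.basisFun (Fin n) ℝ), laplacian]
  simp [iteratedFDeriv_two_apply,
    fderiv_clm_apply (differentiableAt_fderiv_of_contDiffAt_two hu) (differentiableAt_const _)]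

end Laplacian

section Superlevel

variable {X β : Type*} [TopologicalSpace X] [LinearOrder β] [TopologicalSpace β]
  [OrderClosedTopology β] {U : Set X} {u : X → β} {b : β}

theorem isCompact_superlevel_of_eventually_lt (hU : IsClosed U) (hcont : ContinuousOn u U)
    (hlim : ∀ᶠ x in cocompact X ⊓ 𝓟 U, u x < b) : IsCompact {x ∈ U | b ≤ u x} := by
  obtain ⟨C, hC, hlt⟩ := mem_cocompact.mp (eventually_inf_principal.mp hlim)
  refine hC.of_isClosed_subset (hcont.preimage_isClosed_of_isClosed hU isClosed_Ici) ?_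
  rintro x ⟨hxU, hbx⟩
  by_contra hxC
  exact (hlt hxC hxU).not_ge hbx

theorem le_on_frontier_superlevel (hU : IsClosed U) (hcont : ContinuousOn u U)
    (hfrontier : ∀ x ∈ frontier U, u x ≤ b) {x : X} (hx : x ∈ frontier {y ∈ U | b ≤ u y}) :
    u x ≤ b := by
  have hclosed : IsClosed {y ∈ U | b ≤ u y} := hcont.preimage_isClosed_of_isClosed hU isClosed_Ici
  have hxU : x ∈ U := (hclosed.frontier_subset hx).1
  by_contra! hbx
  have hxint : x ∈ interior U := by
    by_contra hxint
    exact hbx.not_ge (hfrontier x ⟨subset_closure hxU, hxint⟩)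
  have hUx : U ∈ 𝓝 x := mem_interior_iff_mem_nhds.mp hxint
  refine hx.2 (mem_interior_iff_mem_nhds.mpr ?_)
  filter_upwards [hUx, (hcont.continuousAt hUx).eventually_const_lt hbx] with y hyU hby
  exact ⟨hyU, hby.le⟩

end Superlevel

section MaximumPrinciple

variable {E : Type*} [NormedAddCommGroup E] [InnerProductSpace ℝ E] [FiniteDimensional ℝ E]
  {S U : Set E} {u : E → ℝ} {m : ℝ}

theorem exists_mem_frontier_isMaxOn_of_laplacian_pos (hS : IsCompact S) (hne : S.Nonempty)
    (hcont : ContinuousOn u S) (hu : ∀ x ∈ interior S, ContDiffAt ℝ 2 u x)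
    (hΔ : ∀ x ∈ interior S, 0 < Δ u x) : ∃ x ∈ frontier S, IsMaxOn u S x := by
  obtain ⟨x, hxS, hmax⟩ := hS.exists_isMaxOn hne hcont
  refine ⟨x, ⟨subset_closure hxS, fun hx => ?_⟩, hmax⟩
  have hlocal : IsLocalMax u x := hmax.isLocalMax (mem_interior_iff_mem_nhds.mp hx)
  exact (hΔ x hx).not_ge (laplacian_nonpos_of_isLocalMax hlocal (hu x hx))

variable [Nontrivial E]

theorem le_of_laplacian_nonneg_of_isCompact (hS : IsCompact S) (hcont : ContinuousOn u S)
    (hu : ∀ x ∈ interior S, ContDiffAt ℝ 2 u x) (hΔ : ∀ x ∈ interior S, 0 ≤ Δ u x)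
    (hfrontier : ∀ x ∈ frontier S, u x ≤ m) {x : E} (hx : x ∈ S) : u x ≤ m := by
  let q : E → ℝ := fun y => ‖y‖ ^ 2
  have hq : ContDiff ℝ 2 q := contDiff_norm_sq ℝ
  obtain ⟨M, hM⟩ := hS.bddAbove_image hq.continuous.continuousOn
  have hperturbed (ε : ℝ) (hε : 0 < ε) : u x ≤ m + ε * M := by
    have hεq : ContDiff ℝ 2 (ε • q) := contDiff_const.smul hq
    have hΔ_pos (y : E) (hy : y ∈ interior S) : 0 < Δ (u + ε • q) y := by
      have hdim : (0 : ℝ) < Module.finrank ℝ E := mod_cast Module.finrank_pos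
      rw [(hu y hy).laplacian_add hεq.contDiffAt,
        InnerProductSpace.laplacian_smul ε hq.contDiffAt, laplacian_norm_sq, smul_eq_mul]
      have := hΔ y hy
      positivity
    obtain ⟨y, hy, hmax⟩ := exists_mem_frontier_isMaxOn_of_laplacian_pos hS ⟨x, hx⟩
      (hcont.add hεq.continuous.continuousOn)
      (fun y hy => (hu y hy).add hεq.contDiffAt) hΔ_pos
    calc u x ≤ u x + ε * q x := le_add_of_nonneg_right (by positivity)
      _ ≤ u y + ε * q y := hmax hx
      _ ≤ m + ε * M := by
        gcongr
        exacts [hfrontier y hy, hM (mem_image_of_mem q (hS.isClosed.frontier_subset hy))]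
  have hlim : Tendsto (fun ε : ℝ => m + ε * M) (𝓝[>] 0) (𝓝 m) := by
    have : Continuous fun ε : ℝ => m + ε * M := by fun_prop
    simpa using (this.tendsto 0).mono_left nhdsWithin_le_nhds
  exact ge_of_tendsto hlim (eventually_mem_nhdsWithin.mono hperturbed)

theorem le_of_laplacian_nonneg_of_lt (hU : IsClosed U) (hcont : ContinuousOn u U)
    (hu : ∀ x ∈ interior U, ContDiffAt ℝ 2 u x)
    (hΔ : ∀ x ∈ interior U, m < u x → 0 ≤ Δ u x)
    (hlim : ∀ b > m, ∀ᶠ x in cocompact E ⊓ 𝓟 U, u x < b)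
    (hfrontier : ∀ x ∈ frontier U, u x ≤ m) {x : E} (hx : x ∈ U) : u x ≤ m := by
  refine le_of_forall_gt_imp_ge_of_dense fun b hb => ?_
  rcases le_total (u x) b with hle | hge
  · exact hle
  have hsub : interior {y ∈ U | b ≤ u y} ⊆ interior U := interior_mono (sep_subset _ _)
  refine le_of_laplacian_nonneg_of_isCompact
    (isCompact_superlevel_of_eventually_lt hU hcont (hlim b hb)) (hcont.mono (sep_subset _ _))
    (fun y hy => hu y (hsub hy))
    (fun y hy => hΔ y (hsub hy) (hb.trans_le (interior_subset hy).2))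
    (fun y hy => le_on_frontier_superlevel hU hcont
      (fun z hz => (hfrontier z hz).trans hb.le) hy) ⟨hx, hge⟩

theorem stmt_9_general {f g K H : E → ℝ} (hU : IsClosed U)
    (hf_nonneg : ∀ x ∈ U, 0 ≤ f x) (hf_cont : ContinuousOn f U) (hg_cont : ContinuousOn g U)
    (hf : ∀ x ∈ interior U, ContDiffAt ℝ 2 f x) (hg : ∀ x ∈ interior U, ContDiffAt ℝ 2 g x)
    (hΔf : ∀ x ∈ interior U, Δ f x ≤ K x * f x) (hΔg : ∀ x ∈ interior U, H x * g x ≤ Δ g x)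
    (hg_decay : Tendsto g (cocompact E ⊓ 𝓟 U) (𝓝 0))
    (hKH : ∀ x ∈ interior U, K x ≤ H x) (hK : ∀ x ∈ interior U, 0 ≤ K x)
    (hfrontier : ∀ x ∈ frontier U, g x ≤ f x) : ∀ x ∈ U, g x ≤ f x := by
  have hΔ (x : E) (hx : x ∈ interior U) (hlt : 0 < (g - f) x) : 0 ≤ Δ (g - f) x := by
    have hfg : f x ≤ g x := (sub_pos.mp hlt).le
    have hg_nonneg : 0 ≤ g x := (hf_nonneg x (interior_subset hx)).trans hfg
    rw [(hg x hx).laplacian_sub (hf x hx), sub_nonneg]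
    calc Δ f x ≤ K x * f x := hΔf x hx
      _ ≤ K x * g x := mul_le_mul_of_nonneg_left hfg (hK x hx)
      _ ≤ H x * g x := mul_le_mul_of_nonneg_right (hKH x hx) hg_nonneg
      _ ≤ Δ g x := hΔg x hx
  have hlim (b : ℝ) (hb : b > 0) : ∀ᶠ x in cocompact E ⊓ 𝓟 U, (g - f) x < b := by
    filter_upwards [hg_decay.eventually (gt_mem_nhds hb), mem_inf_of_right (mem_principal_self U)]
      with x hgx hx
    exact (sub_le_self _ (hf_nonneg x hx)).trans_lt hgx
  exact fun x hx => sub_nonpos.mp <| le_of_laplacian_nonneg_of_lt hU (hg_cont.sub hf_cont)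
    (fun y hy => (hg y hy).sub (hf y hy)) hΔ hlim (fun y hy => sub_nonpos.mpr (hfrontier y hy)) hx

end MaximumPrinciple

/-- **Theorem 6.5 (comparison principle on the exterior of a ball).**
If, on `U = {|x| ≥ R}`, `f, g ≥ 0` are C² (on a neighborhood of `U`) with
`Δf ≤ K f`, `Δg ≥ H g`, `f, g → 0` at infinity, `H ≥ K ≥ 0` on `U`, and `f ≥ g` on
`{|x| = R}`, then `f ≥ g` on all of `U`. -/
theorem stmt_9 {n : ℕ} (hn : 1 ≤ n) (R : ℝ) (hR : 0 < R)
    (f g K H : EuclideanSpace ℝ (Fin n) → ℝ)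
    (U : Set (EuclideanSpace ℝ (Fin n))) (hU : U = {x | R ≤ ‖x‖})
    (hf0 : ∀ x, 0 ≤ f x) (hg0 : ∀ x, 0 ≤ g x)
    (hfC2 : ∃ O, IsOpen O ∧ U ⊆ O ∧ ContDiffOn ℝ 2 f O)
    (hgC2 : ∃ O, IsOpen O ∧ U ⊆ O ∧ ContDiffOn ℝ 2 g O)
    (hKmeas : Measurable fun x : U => K x.1)
    (hHmeas : Measurable fun x : U => H x.1)
    (hi : ∀ x ∈ U, laplacian f x ≤ K x * f x)
    (hii : ∀ x ∈ U, H x * g x ≤ laplacian g x)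
    (hf_decay : Filter.Tendsto f (Filter.cocompact _) (nhds 0))
    (hg_decay : Filter.Tendsto g (Filter.cocompact _) (nhds 0))
    (hKH : ∀ x ∈ U, K x ≤ H x) (hK0 : ∀ x ∈ U, 0 ≤ K x)
    (hbdry : ∀ x : EuclideanSpace ℝ (Fin n), ‖x‖ = R → g x ≤ f x) :
    ∀ x ∈ U, g x ≤ f x := by
  obtain ⟨O, hO, hUO, hf⟩ := hfC2
  obtain ⟨O', hO', hUO', hg⟩ := hgC2
  have hf_at (x) (hx : x ∈ interior U) : ContDiffAt ℝ 2 f x :=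
    hf.contDiffAt (hO.mem_nhds (hUO (interior_subset hx)))
  have hg_at (x) (hx : x ∈ interior U) : ContDiffAt ℝ 2 g x :=
    hg.contDiffAt (hO'.mem_nhds (hUO' (interior_subset hx)))
  have : Nontrivial (EuclideanSpace ℝ (Fin n)) :=
    Module.nontrivial_of_finrank_pos (R := ℝ) (by rwa [finrank_euclideanSpace_fin])
  have hU_closed : IsClosed U := hU ▸ isClosed_le continuous_const continuous_norm
  have hU_frontier (x) (hx : x ∈ frontier U) : ‖x‖ = R := by
    subst hU
    exact (frontier_le_subset_eq continuous_const continuous_norm hx).symm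
  exact stmt_9_general hU_closed (fun x _ => hf0 x) (hf.continuousOn.mono hUO)
    (hg.continuousOn.mono hUO') hf_at hg_at
    (fun x hx => laplacian_eq_innerProductSpace_laplacian (hf_at x hx) ▸
      hi x (interior_subset hx))
    (fun x hx => laplacian_eq_innerProductSpace_laplacian (hg_at x hx) ▸
      hii x (interior_subset hx))
    (hg_decay.mono_left inf_le_left) (fun x hx => hKH x (interior_subset hx))
    (fun x hx => hK0 x (interior_subset hx)) fun x hx => hbdry x (hU_frontier x hx)
end

section
/- Let Ω₁ and Ω₂ be Polish spaces with their Borel σ-algebras, let ℙ be a probability measure on Ω₁ × Ω₂, and let ℚ₁, ℚ₂ be probability measures on Ω₁ and Ω₂ respectively. Assume ℙ is absolutely continuous with respect to the product measure ℚ₁ ⊗ ℚ₂. Then ℋ(ℙ | ℚ₁⊗ℚ₂) ≥ ℋ(ℙ₁ | ℚ₁) + ℋ(ℙ₂ | ℚ₂), where ℙ₁ and ℙ₂ are the two marginals of ℙ (its pushforwards under the coordinate projections). -/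
open MeasureTheory
open scoped Classical

/-- The relative entropy (Kullback–Leibler divergence) `ℋ(P|Q) = ∫ log (dP/dQ) dP`,
with value `+∞` when `P` is not absolutely continuous with respect to `Q` (or when the
log-likelihood ratio is not integrable). -/
noncomputable def relEntropy {Ω : Type*} [MeasurableSpace Ω] (P Q : Measure Ω) : EReal :=
  if P ≪ Q ∧ Integrable (llr P Q) P then ((∫ x, llr P Q x ∂P : ℝ) : EReal) else ⊤

/-!
Write `P₁`, `P₂` for the marginals of `P`. Since `P`-almost every point has positive marginal
densities `dP₁/dQ₁` and `dP₂/dQ₂`, absolute continuity `P ≪ Q₁ ⊗ Q₂` upgrades to `P ≪ P₁ ⊗ P₂`, and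
`dP/d(Q₁ ⊗ Q₂) (x, y) = dP/d(P₁ ⊗ P₂) (x, y) * dP₁/dQ₁ (x) * dP₂/dQ₂ (y)`.
Integrating logarithms against `P` shows that the gap in the superadditivity inequality is the
mutual information `ℋ(P | P₁ ⊗ P₂)`, which is nonnegative.
-/

open InformationTheory

section Decomposition

variable {α : Type*} [MeasurableSpace α] {μ ν κ : Measure α}

lemma absolutelyContinuous_withDensity_of_ae_ne_zero {f : α → ENNReal} (hμν : μ ≪ ν)
    (hf : Measurable f) (hf_ne_zero : ∀ᵐ x ∂μ, f x ≠ 0) : μ ≪ ν.withDensity f := by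
  refine Measure.ae_le_iff_absolutelyContinuous.mp fun s hs ↦ ?_
  filter_upwards [hμν.ae_le ((ae_withDensity_iff hf).mp hs), hf_ne_zero] with x hxs hx
  exact hxs hx

lemma llr_ae_eq_add [SigmaFinite μ] [SigmaFinite ν] [SigmaFinite κ] (hμν : μ ≪ ν) (hνκ : ν ≪ κ) :
    llr μ κ =ᵐ[μ] llr μ ν + llr ν κ := by
  filter_upwards [(hμν.trans hνκ).ae_le (Measure.rnDeriv_mul_rnDeriv (κ := κ) hμν),
    Measure.rnDeriv_pos hμν, hμν.ae_le (Measure.rnDeriv_pos hνκ),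
    hμν.ae_le (Measure.rnDeriv_ne_top μ ν), (hμν.trans hνκ).ae_le (Measure.rnDeriv_ne_top ν κ)]
    with x h_mul hμν_pos hνκ_pos hμν_top hνκ_top
  simp only [llr, Pi.add_apply]
  rw [← h_mul, Pi.mul_apply, ENNReal.toReal_mul,
    Real.log_mul (ENNReal.toReal_pos hμν_pos.ne' hμν_top).ne'
      (ENNReal.toReal_pos hνκ_pos.ne' hνκ_top).ne']

end Decomposition

section Product

variable {α β : Type*} [MeasurableSpace α] [MeasurableSpace β]
  {μ₁ ν₁ : Measure α} {μ₂ ν₂ : Measure β}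

lemma prod_eq_withDensity_rnDeriv [SFinite μ₁] [SigmaFinite ν₁] [SFinite μ₂] [SigmaFinite ν₂]
    (h₁ : μ₁ ≪ ν₁) (h₂ : μ₂ ≪ ν₂) :
    μ₁.prod μ₂ =
      (ν₁.prod ν₂).withDensity fun z ↦ μ₁.rnDeriv ν₁ z.1 * μ₂.rnDeriv ν₂ z.2 := by
  rw [← prod_withDensity (Measure.measurable_rnDeriv μ₁ ν₁) (Measure.measurable_rnDeriv μ₂ ν₂),
    Measure.withDensity_rnDeriv_eq μ₁ ν₁ h₁, Measure.withDensity_rnDeriv_eq μ₂ ν₂ h₂]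

lemma rnDeriv_prod_ae_eq_mul [SFinite μ₁] [SigmaFinite ν₁] [SFinite μ₂] [SigmaFinite ν₂]
    (h₁ : μ₁ ≪ ν₁) (h₂ : μ₂ ≪ ν₂) :
    (μ₁.prod μ₂).rnDeriv (ν₁.prod ν₂) =ᵐ[ν₁.prod ν₂]
      fun z ↦ μ₁.rnDeriv ν₁ z.1 * μ₂.rnDeriv ν₂ z.2 := by
  rw [prod_eq_withDensity_rnDeriv h₁ h₂]
  exact Measure.rnDeriv_withDensity _ (by fun_prop)

lemma llr_prod_ae_eq_add [SigmaFinite μ₁] [SigmaFinite ν₁] [SigmaFinite μ₂] [SigmaFinite ν₂]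
    (h₁ : μ₁ ≪ ν₁) (h₂ : μ₂ ≪ ν₂) :
    llr (μ₁.prod μ₂) (ν₁.prod ν₂) =ᵐ[μ₁.prod μ₂] fun z ↦ llr μ₁ ν₁ z.1 + llr μ₂ ν₂ z.2 := by
  have h_fst := Measure.quasiMeasurePreserving_fst (μ := μ₁) (ν := μ₂)
  have h_snd := Measure.quasiMeasurePreserving_snd (μ := μ₁) (ν := μ₂)
  filter_upwards [(h₁.prod h₂).ae_le (rnDeriv_prod_ae_eq_mul h₁ h₂),
    h_fst.ae (Measure.rnDeriv_pos h₁), h_snd.ae (Measure.rnDeriv_pos h₂),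
    h_fst.ae (h₁.ae_le (Measure.rnDeriv_ne_top μ₁ ν₁)),
    h_snd.ae (h₂.ae_le (Measure.rnDeriv_ne_top μ₂ ν₂))]
    with z h_mul h₁_pos h₂_pos h₁_top h₂_top
  simp only [llr]
  rw [h_mul, ENNReal.toReal_mul, Real.log_mul (ENNReal.toReal_pos h₁_pos.ne' h₁_top).ne'
    (ENNReal.toReal_pos h₂_pos.ne' h₂_top).ne']

end Product

section Marginals

variable {α β : Type*} [MeasurableSpace α] [MeasurableSpace β]
  {P : Measure (α × β)} {Q₁ : Measure α} {Q₂ : Measure β}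

lemma fst_absolutelyContinuous_of_prod (h : P ≪ Q₁.prod Q₂) : P.fst ≪ Q₁ :=
  (h.map measurable_fst).trans Measure.quasiMeasurePreserving_fst.absolutelyContinuous

lemma snd_absolutelyContinuous_of_prod (h : P ≪ Q₁.prod Q₂) : P.snd ≪ Q₂ :=
  (h.map measurable_snd).trans Measure.quasiMeasurePreserving_snd.absolutelyContinuous

lemma absolutelyContinuous_fst_prod_snd [SFinite P] [SigmaFinite Q₁] [SigmaFinite Q₂]
    (h : P ≪ Q₁.prod Q₂) : P ≪ P.fst.prod P.snd := by
  have h₁ := fst_absolutelyContinuous_of_prod h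
  have h₂ := snd_absolutelyContinuous_of_prod h
  rw [prod_eq_withDensity_rnDeriv h₁ h₂]
  refine absolutelyContinuous_withDensity_of_ae_ne_zero h (by fun_prop) ?_
  filter_upwards [ae_of_ae_map measurable_fst.aemeasurable (Measure.rnDeriv_pos h₁),
    ae_of_ae_map measurable_snd.aemeasurable (Measure.rnDeriv_pos h₂)] with z hz₁ hz₂
  exact mul_ne_zero hz₁.ne' hz₂.ne'

lemma absolutelyContinuous_prod_iff_marginals [SFinite P] [SigmaFinite Q₁] [SigmaFinite Q₂] :
    P ≪ Q₁.prod Q₂ ↔ P ≪ P.fst.prod P.snd ∧ P.fst ≪ Q₁ ∧ P.snd ≪ Q₂ :=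
  ⟨fun h ↦ ⟨absolutelyContinuous_fst_prod_snd h, fst_absolutelyContinuous_of_prod h,
    snd_absolutelyContinuous_of_prod h⟩, fun ⟨h, h₁, h₂⟩ ↦ h.trans (h₁.prod h₂)⟩

lemma llr_prod_ae_eq_add_marginals [IsFiniteMeasure P] [SigmaFinite Q₁] [SigmaFinite Q₂]
    (h : P ≪ Q₁.prod Q₂) :
    llr P (Q₁.prod Q₂) =ᵐ[P]
      fun z ↦ llr P (P.fst.prod P.snd) z + (llr P.fst Q₁ z.1 + llr P.snd Q₂ z.2) := by
  obtain ⟨h_marginals, h₁, h₂⟩ := absolutelyContinuous_prod_iff_marginals.mp h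
  filter_upwards [llr_ae_eq_add h_marginals (h₁.prod h₂),
    h_marginals.ae_le (llr_prod_ae_eq_add h₁ h₂)] with z h_add h_prod
  rw [h_add, Pi.add_apply, h_prod]

lemma integrable_llr_fst [IsFiniteMeasure P] [IsFiniteMeasure Q₁] [IsProbabilityMeasure Q₂]
    (h : P ≪ Q₁.prod Q₂) (h_int : Integrable (llr P (Q₁.prod Q₂)) P) :
    Integrable (llr P.fst Q₁) P.fst := by
  have h_map := integrable_llr_map h measurable_fst h_int
  rwa [← Measure.fst, ← Measure.fst, Measure.fst_prod] at h_map

lemma integrable_llr_snd [IsFiniteMeasure P] [IsProbabilityMeasure Q₁] [IsFiniteMeasure Q₂]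
    (h : P ≪ Q₁.prod Q₂) (h_int : Integrable (llr P (Q₁.prod Q₂)) P) :
    Integrable (llr P.snd Q₂) P.snd := by
  have h_map := integrable_llr_map h measurable_snd h_int
  rwa [← Measure.snd, ← Measure.snd, Measure.snd_prod] at h_map

lemma integrable_llr_prod_iff_marginals [IsFiniteMeasure P] [IsProbabilityMeasure Q₁]
    [IsProbabilityMeasure Q₂] (h : P ≪ Q₁.prod Q₂) :
    Integrable (llr P (Q₁.prod Q₂)) P ↔
      Integrable (llr P (P.fst.prod P.snd)) P ∧
        Integrable (llr P.fst Q₁) P.fst ∧ Integrable (llr P.snd Q₂) P.snd := by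
  have h_sum (h₁ : Integrable (llr P.fst Q₁) P.fst) (h₂ : Integrable (llr P.snd Q₂) P.snd) :
      Integrable (fun z ↦ llr P.fst Q₁ z.1 + llr P.snd Q₂ z.2) P :=
    (h₁.comp_measurable measurable_fst).add (h₂.comp_measurable measurable_snd)
  rw [integrable_congr (llr_prod_ae_eq_add_marginals h)]
  constructor
  · intro h_int
    have h_int_prod := h_int.congr (llr_prod_ae_eq_add_marginals h).symm
    have h₁ := integrable_llr_fst h h_int_prod
    have h₂ := integrable_llr_snd h h_int_prod
    exact ⟨(integrable_add_iff_integrable_left' (h_sum h₁ h₂)).mp h_int, h₁, h₂⟩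
  · rintro ⟨h_mutual, h₁, h₂⟩
    exact h_mutual.add (h_sum h₁ h₂)

lemma integral_llr_prod_eq_add_marginals [IsFiniteMeasure P] [IsProbabilityMeasure Q₁]
    [IsProbabilityMeasure Q₂] (h : P ≪ Q₁.prod Q₂)
    (h_int : Integrable (llr P (Q₁.prod Q₂)) P) :
    ∫ z, llr P (Q₁.prod Q₂) z ∂P =
      ∫ z, llr P (P.fst.prod P.snd) z ∂P +
        (∫ x, llr P.fst Q₁ x ∂P.fst + ∫ y, llr P.snd Q₂ y ∂P.snd) := by
  obtain ⟨h_mutual, h₁, h₂⟩ := (integrable_llr_prod_iff_marginals h).mp h_int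
  have h₁_comp : Integrable (fun z ↦ llr P.fst Q₁ z.1) P := h₁.comp_measurable measurable_fst
  have h₂_comp : Integrable (fun z ↦ llr P.snd Q₂ z.2) P := h₂.comp_measurable measurable_snd
  calc ∫ z, llr P (Q₁.prod Q₂) z ∂P
  _ = ∫ z, llr P (P.fst.prod P.snd) z + (llr P.fst Q₁ z.1 + llr P.snd Q₂ z.2) ∂P :=
    integral_congr_ae (llr_prod_ae_eq_add_marginals h)
  _ = ∫ z, llr P (P.fst.prod P.snd) z ∂P +
        (∫ z, llr P.fst Q₁ z.1 ∂P + ∫ z, llr P.snd Q₂ z.2 ∂P) := by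
    rw [← integral_add h₁_comp h₂_comp]
    exact integral_add h_mutual (h₁_comp.add h₂_comp)
  _ = ∫ z, llr P (P.fst.prod P.snd) z ∂P +
        (∫ x, llr P.fst Q₁ x ∂P.fst + ∫ y, llr P.snd Q₂ y ∂P.snd) := by
    rw [Measure.fst, Measure.snd, integral_map measurable_fst.aemeasurable (by fun_prop),
      integral_map measurable_snd.aemeasurable (by fun_prop)]

theorem klDiv_prod_eq_add_marginals (P : Measure (α × β)) (Q₁ : Measure α) (Q₂ : Measure β)
    [IsProbabilityMeasure P] [IsProbabilityMeasure Q₁] [IsProbabilityMeasure Q₂] :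
    klDiv P (Q₁.prod Q₂) =
      klDiv P (P.fst.prod P.snd) + (klDiv P.fst Q₁ + klDiv P.snd Q₂) := by
  have h_top_iff : klDiv P (Q₁.prod Q₂) = ⊤ ↔
      klDiv P (P.fst.prod P.snd) + (klDiv P.fst Q₁ + klDiv P.snd Q₂) = ⊤ := by
    rw [← not_iff_not]
    simp only [← ne_eq, ENNReal.add_ne_top, klDiv_ne_top_iff]
    have h_ac := absolutelyContinuous_prod_iff_marginals (P := P) (Q₁ := Q₁) (Q₂ := Q₂)
    have h_int := integrable_llr_prod_iff_marginals (P := P) (Q₁ := Q₁) (Q₂ := Q₂)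
    tauto
  by_cases h_top : klDiv P (Q₁.prod Q₂) = ⊤
  · rw [h_top, h_top_iff.mp h_top]
  have h_sum_ne_top := h_top_iff.not.mp h_top
  obtain ⟨h_ac, h_int⟩ := klDiv_ne_top_iff.mp h_top
  obtain ⟨h_ac_mutual, h₁, h₂⟩ := absolutelyContinuous_prod_iff_marginals.mp h_ac
  obtain ⟨h_mutual_ne_top, h_marginals_ne_top⟩ := ENNReal.add_ne_top.mp h_sum_ne_top
  obtain ⟨h₁_ne_top, h₂_ne_top⟩ := ENNReal.add_ne_top.mp h_marginals_ne_top
  rw [← ENNReal.toReal_eq_toReal_iff' h_top h_sum_ne_top,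
    ENNReal.toReal_add h_mutual_ne_top h_marginals_ne_top, ENNReal.toReal_add h₁_ne_top h₂_ne_top,
    toReal_klDiv_of_measure_eq h_ac (by simp), toReal_klDiv_of_measure_eq h_ac_mutual (by simp),
    toReal_klDiv_of_measure_eq h₁ (by simp), toReal_klDiv_of_measure_eq h₂ (by simp),
    integral_llr_prod_eq_add_marginals h_ac h_int]

end Marginals

lemma relEntropy_eq_klDiv {Ω : Type*} [MeasurableSpace Ω] (P Q : Measure Ω)
    [IsFiniteMeasure P] [IsFiniteMeasure Q] (h_univ : P Set.univ = Q Set.univ) :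
    relEntropy P Q = (klDiv P Q : EReal) := by
  unfold relEntropy
  split_ifs with h
  · rw [← toReal_klDiv_of_measure_eq h.1 h_univ,
      EReal.coe_ennreal_toReal (klDiv_ne_top h.1 h.2)]
  · rw [not_ne_iff.mp (klDiv_ne_top_iff.not.mpr h), EReal.coe_ennreal_top]

theorem stmt_12_general {Ω₁ Ω₂ : Type*} [MeasurableSpace Ω₁] [MeasurableSpace Ω₂]
    (P : Measure (Ω₁ × Ω₂)) [IsProbabilityMeasure P]
    (Q₁ : Measure Ω₁) [IsProbabilityMeasure Q₁]
    (Q₂ : Measure Ω₂) [IsProbabilityMeasure Q₂] :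
    relEntropy (P.map Prod.fst) Q₁ + relEntropy (P.map Prod.snd) Q₂ ≤
      relEntropy P (Q₁.prod Q₂) := by
  change relEntropy P.fst Q₁ + relEntropy P.snd Q₂ ≤ relEntropy P (Q₁.prod Q₂)
  rw [relEntropy_eq_klDiv P.fst Q₁ (by simp), relEntropy_eq_klDiv P.snd Q₂ (by simp),
    relEntropy_eq_klDiv P (Q₁.prod Q₂) (by simp), ← EReal.coe_ennreal_add,
    EReal.coe_ennreal_le_coe_ennreal_iff, klDiv_prod_eq_add_marginals P Q₁ Q₂]
  exact le_add_self

/-- **Lemma 7.9 (superadditivity of relative entropy).**  For a probability measure `ℙ` on a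
product of Polish spaces and product reference probability measure `ℚ₁ ⊗ ℚ₂`, with
`ℙ ≪ ℚ₁ ⊗ ℚ₂`, the relative entropy dominates the sum of the relative entropies of the
marginals: `ℋ(ℙ | ℚ₁⊗ℚ₂) ≥ ℋ(ℙ₁ | ℚ₁) + ℋ(ℙ₂ | ℚ₂)`. -/
theorem stmt_12 {Ω₁ Ω₂ : Type*}
    [TopologicalSpace Ω₁] [PolishSpace Ω₁] [MeasurableSpace Ω₁] [BorelSpace Ω₁]
    [TopologicalSpace Ω₂] [PolishSpace Ω₂] [MeasurableSpace Ω₂] [BorelSpace Ω₂]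
    (P : Measure (Ω₁ × Ω₂)) [IsProbabilityMeasure P]
    (Q₁ : Measure Ω₁) [IsProbabilityMeasure Q₁]
    (Q₂ : Measure Ω₂) [IsProbabilityMeasure Q₂]
    (hac : P ≪ Q₁.prod Q₂) :
    relEntropy (P.map Prod.fst) Q₁ + relEntropy (P.map Prod.snd) Q₂ ≤
      relEntropy P (Q₁.prod Q₂) :=
  stmt_12_general P Q₁ Q₂
end

section
/- Let Ω be a Polish space with its Borel σ-algebra, let N ≥ k ≥ 1 be integers, let ℙ be a probability measure on Ω^N invariant under the action of all permutations of the N coordinates, and let ℚ be a probability measure on Ω. Let ℙ^{(k)} denote the marginal of ℙ on the first k coordinates and m := ⌊N/k⌋. Then m · ℋ(ℙ^{(k)} | ℚ^{⊗k}) ≤ ℋ(ℙ | ℚ^{⊗N}). -/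
open MeasureTheory
open scoped Classical

/-!
Disjoint blocks of coordinates are independent under `ℚ^{⊗N}`, and for variables `X i` independent
under the reference measure the relative entropies of their laws add up to at most the relative
entropy of the joint law. For two variables this is the chain rule
`ℋ(ρ|μ ⊗ ν) = ℋ(ρ₁|μ) + ℋ(ρ|ρ₁ ⊗ ν)`, the last term being at least `ℋ(ρ₂|ν)` by data processing.
The disintegration of `ρ` over its first marginal `ρ₁` behind the chain rule comes from the density
of `ρ` with respect to `ρ₁ ⊗ ν`. By exchangeability, all `⌊N/k⌋` blocks of length `k` have
the law `ℙ^{(k)}`.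
-/

open ProbabilityTheory InformationTheory
open scoped ENNReal

lemma relEntropy_eq_coe_klDiv {α : Type*} [MeasurableSpace α] {μ ν : Measure α}
    [IsFiniteMeasure μ] [IsFiniteMeasure ν] (h_univ : μ Set.univ = ν Set.univ) :
    relEntropy μ ν = (klDiv μ ν : EReal) := by
  unfold relEntropy
  split_ifs with h
  · rw [← toReal_klDiv_of_measure_eq h.1 h_univ, ← EReal.toReal_coe_ennreal]
    exact EReal.coe_toReal (by simpa using klDiv_ne_top h.1 h.2) (by simp)
  · rw [klDiv_eq_top_iff.mpr (not_and.mp h), EReal.coe_ennreal_top]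

section ProductMeasure

variable {α β : Type*} [MeasurableSpace α] [MeasurableSpace β]

lemma absolutelyContinuous_fst_prod {ρ : Measure (α × β)} {μ : Measure α} {ν : Measure β}
    [SFinite ν] (h : ρ ≪ μ.prod ν) : ρ ≪ ρ.fst.prod ν := by
  refine Measure.AbsolutelyContinuous.mk fun s hs hs_null ↦ ?_
  let B : Set α := {x | ν (Prod.mk x ⁻¹' s) ≠ 0}
  have hB : MeasurableSet B := (measurable_measure_prodMk_left hs) (measurableSet_singleton 0).compl
  have hρB : ρ (Prod.fst ⁻¹' B) = 0 := by
    rw [← Measure.fst_apply hB]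
    exact Measure.measure_ae_null_of_prod_null hs_null
  have hρs : ρ (s \ Prod.fst ⁻¹' B) = 0 := by
    refine h (Measure.measure_prod_null_of_ae_null (hs.diff (measurable_fst hB))
      (ae_of_all _ fun x ↦ ?_))
    by_cases hx : ν (Prod.mk x ⁻¹' s) = 0
    · exact measure_mono_null (Set.preimage_mono Set.sdiff_subset) hx
    · simp [B, hx]
  exact measure_mono_null (by simp) (measure_union_null hρs hρB)

lemma lintegral_rnDeriv_fst_prod_ae_eq_one {ρ : Measure (α × β)} {ν : Measure β}
    [IsFiniteMeasure ρ] [SigmaFinite ν] (h : ρ ≪ ρ.fst.prod ν) :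
    (fun x ↦ ∫⁻ y, ρ.rnDeriv (ρ.fst.prod ν) (x, y) ∂ν) =ᵐ[ρ.fst] 1 := by
  have hf := Measure.measurable_rnDeriv ρ (ρ.fst.prod ν)
  refine ae_eq_of_forall_setLIntegral_eq_of_sigmaFinite hf.lintegral_prod_right'
    measurable_one fun s hs _ ↦ ?_
  calc ∫⁻ x in s, ∫⁻ y, ρ.rnDeriv (ρ.fst.prod ν) (x, y) ∂ν ∂ρ.fst
      = ∫⁻ z in s ×ˢ Set.univ, ρ.rnDeriv (ρ.fst.prod ν) z ∂ρ.fst.prod ν := by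
        rw [setLIntegral_prod _ hf.aemeasurable, Measure.restrict_univ]
    _ = ρ (s ×ˢ Set.univ) := Measure.setLIntegral_rnDeriv h _
    _ = ∫⁻ x in s, (1 : α → ℝ≥0∞) x ∂ρ.fst := by
        simp [Measure.fst_apply hs, Set.prod_univ]

/-- The conditional law at `x` has density `y ↦ dρ/d(ρ.fst ⊗ ν) (x, y)` with respect to `ν`. -/
lemma exists_isMarkovKernel_fst_compProd_eq {ρ : Measure (α × β)} {ν : Measure β}
    [IsFiniteMeasure ρ] [IsProbabilityMeasure ν] (h : ρ ≪ ρ.fst.prod ν) :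
    ∃ κ : Kernel α β, IsMarkovKernel κ ∧ ρ.fst ⊗ₘ κ = ρ := by
  let f := ρ.rnDeriv (ρ.fst.prod ν)
  have hf : Measurable f := Measure.measurable_rnDeriv _ _
  let mass : α → ℝ≥0∞ := fun x ↦ ∫⁻ y, f (x, y) ∂ν
  have h_mass : Measurable mass := hf.lintegral_prod_right'
  have h_mass_one : ∀ᵐ x ∂ρ.fst, mass x = 1 := lintegral_rnDeriv_fst_prod_ae_eq_one h
  -- On the `ρ.fst`-null set where the section of `f` has the wrong mass, use `ν` itself.
  let g : α → β → ℝ≥0∞ := fun x y ↦ if mass x = 1 then f (x, y) else 1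
  have hg : Measurable (Function.uncurry g) :=
    hf.ite ((h_mass.comp measurable_fst) (measurableSet_singleton 1)) measurable_const
  let κ : Kernel α β := (Kernel.const α ν).withDensity g
  have hκ : IsMarkovKernel κ := ⟨fun x ↦ ⟨by
    rw [Kernel.withDensity_apply' _ hg, Kernel.const_apply, Measure.restrict_univ]
    by_cases hx : mass x = 1
    · simpa only [g, if_pos hx] using hx
    · simp [g, hx]⟩⟩
  refine ⟨κ, hκ, ?_⟩
  calc ρ.fst ⊗ₘ κ = (ρ.fst.prod ν).withDensity fun z ↦ g z.1 z.2 := by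
        rw [Measure.compProd_withDensity hg, Measure.compProd_const]
    _ = (ρ.fst.prod ν).withDensity f := withDensity_congr_ae <| by
        filter_upwards [Measure.quasiMeasurePreserving_fst.ae h_mass_one] with z hz
        simp [g, hz]
    _ = ρ := Measure.withDensity_rnDeriv_eq _ _ h

theorem klDiv_prod_eq_add (ρ : Measure (α × β)) (μ : Measure α) (ν : Measure β)
    [IsFiniteMeasure ρ] [IsFiniteMeasure μ] [IsProbabilityMeasure ν] :
    klDiv ρ (μ.prod ν) = klDiv ρ.fst μ + klDiv ρ (ρ.fst.prod ν) := by
  by_cases h : ρ ≪ ρ.fst.prod ν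
  · obtain ⟨κ, _, hκ⟩ := exists_isMarkovKernel_fst_compProd_eq h
    simpa only [hκ, Measure.compProd_const] using
      klDiv_compProd_eq_add ρ.fst μ κ (Kernel.const α ν)
  · rw [klDiv_of_not_ac h, klDiv_of_not_ac (mt absolutelyContinuous_fst_prod h), add_top]

theorem klDiv_fst_add_klDiv_snd_le (ρ : Measure (α × β)) (μ : Measure α) (ν : Measure β)
    [IsProbabilityMeasure ρ] [IsFiniteMeasure μ] [IsProbabilityMeasure ν] :
    klDiv ρ.fst μ + klDiv ρ.snd ν ≤ klDiv ρ (μ.prod ν) := by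
  rw [klDiv_prod_eq_add]
  gcongr
  calc klDiv ρ.snd ν = klDiv (ρ.map Prod.snd) ((ρ.fst.prod ν).map Prod.snd) := by
        rw [← Measure.snd, ← Measure.snd, Measure.snd_prod]
    _ ≤ klDiv ρ (ρ.fst.prod ν) := klDiv_map_le _ _ measurable_snd

end ProductMeasure

section Independence

variable {Ω : Type*} [MeasurableSpace Ω] {μ ν : Measure Ω}

lemma iIndepFun_curry {ι κ α : Type*} [MeasurableSpace α] {X : ι × κ → Ω → α}
    (hX : ∀ p, Measurable (X p)) (h : iIndepFun X μ) :
    iIndepFun (fun i ω j ↦ X (i, j) ω) μ := by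
  have := h.isProbabilityMeasure
  have (p : ι × κ) := Measure.isProbabilityMeasure_map (μ := μ) (hX p).aemeasurable
  have h_block (i : ι) :
      μ.map (fun ω j ↦ X (i, j) ω) = Measure.infinitePi fun j ↦ μ.map (X (i, j)) :=
    (h.precomp (Prod.mk_right_injective i)).map_fun_eq_infinitePi_map fun j ↦ hX (i, j)
  rw [iIndepFun_iff_map_fun_eq_infinitePi_map fun i ↦ by fun_prop]
  simp_rw [h_block]
  rw [← Measure.infinitePi_map_curry fun i j ↦ μ.map (X (i, j)),
    ← h.map_fun_eq_infinitePi_map hX, Measure.map_map (MeasurableEquiv.measurable _) (by fun_prop)]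
  rfl

variable [IsProbabilityMeasure μ]

lemma klDiv_map_add_klDiv_map_le_of_indepFun {α β : Type*} [MeasurableSpace α] [MeasurableSpace β]
    [IsProbabilityMeasure ν] {X : Ω → α} {Y : Ω → β} (hX : Measurable X) (hY : Measurable Y)
    (h : IndepFun X Y ν) :
    klDiv (μ.map X) (ν.map X) + klDiv (μ.map Y) (ν.map Y) ≤
      klDiv (μ.map fun ω ↦ (X ω, Y ω)) (ν.map fun ω ↦ (X ω, Y ω)) := by
  have := Measure.isProbabilityMeasure_map (μ := μ) (hX.prodMk hY).aemeasurable
  have := Measure.isProbabilityMeasure_map (μ := ν) hY.aemeasurable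
  rw [h.map_prod_eq_prod_map_map hX.aemeasurable hY.aemeasurable]
  simpa only [Measure.fst_map_prodMk hY, Measure.snd_map_prodMk hX] using
    klDiv_fst_add_klDiv_snd_le (μ.map fun ω ↦ (X ω, Y ω)) (ν.map X) (ν.map Y)

variable {ι : Type*} {𝓧 : ι → Type*} [∀ i, MeasurableSpace (𝓧 i)] {X : ∀ i, Ω → 𝓧 i}

lemma sum_klDiv_map_le_klDiv_map_restrict_of_iIndepFun (hX : ∀ i, Measurable (X i))
    (h : iIndepFun X ν) (s : Finset ι) :
    ∑ i ∈ s, klDiv (μ.map (X i)) (ν.map (X i)) ≤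
      klDiv (μ.map fun ω (i : s) ↦ X i ω) (ν.map fun ω (i : s) ↦ X i ω) := by
  have := h.isProbabilityMeasure
  induction s using Finset.induction_on with
  | empty => simp
  | insert i s hi ih =>
    let tuple (t : Finset ι) : Ω → ∀ j : t, 𝓧 j := fun ω j ↦ X j ω
    have h_tuple (t : Finset ι) : Measurable (tuple t) := by fun_prop
    have h_indep : IndepFun (X i) (tuple s) ν :=
      (h.indepFun_finset {i} s (Finset.disjoint_singleton_left.mpr hi) hX).comp
        (φ := fun x : ∀ j : ({i} : Finset ι), 𝓧 j ↦ x ⟨i, Finset.mem_singleton_self i⟩)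
        (measurable_pi_apply _) measurable_id
    let split : (∀ j : (insert i s : Finset ι), 𝓧 j) → 𝓧 i × ∀ j : s, 𝓧 j :=
      fun x ↦ (x ⟨i, Finset.mem_insert_self i s⟩, fun j ↦ x ⟨j, Finset.mem_insert_of_mem j.2⟩)
    have h_split : Measurable split := by fun_prop
    have h_map (ξ : Measure Ω) :
        ξ.map (fun ω ↦ (X i ω, tuple s ω)) = (ξ.map (tuple (insert i s))).map split :=
      (Measure.map_map h_split (h_tuple _)).symm
    have := Measure.isProbabilityMeasure_map (μ := μ) (h_tuple (insert i s)).aemeasurable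
    have := Measure.isProbabilityMeasure_map (μ := ν) (h_tuple (insert i s)).aemeasurable
    calc ∑ j ∈ insert i s, klDiv (μ.map (X j)) (ν.map (X j))
        = klDiv (μ.map (X i)) (ν.map (X i)) + ∑ j ∈ s, klDiv (μ.map (X j)) (ν.map (X j)) :=
          Finset.sum_insert hi
      _ ≤ klDiv (μ.map (X i)) (ν.map (X i)) + klDiv (μ.map (tuple s)) (ν.map (tuple s)) := by
          gcongr
      _ ≤ klDiv (μ.map fun ω ↦ (X i ω, tuple s ω)) (ν.map fun ω ↦ (X i ω, tuple s ω)) :=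
          klDiv_map_add_klDiv_map_le_of_indepFun (hX i) (h_tuple s) h_indep
      _ ≤ klDiv (μ.map (tuple (insert i s))) (ν.map (tuple (insert i s))) := by
          rw [h_map, h_map]
          exact klDiv_map_le _ _ h_split

theorem sum_klDiv_map_le_of_iIndepFun (hX : ∀ i, Measurable (X i)) (h : iIndepFun X ν)
    (s : Finset ι) : ∑ i ∈ s, klDiv (μ.map (X i)) (ν.map (X i)) ≤ klDiv μ ν :=
  have := h.isProbabilityMeasure
  (sum_klDiv_map_le_klDiv_map_restrict_of_iIndepFun hX h s).trans
    (klDiv_map_le _ _ (by fun_prop))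

end Independence

section Exchangeable

variable {Ω ι κ τ : Type*} [MeasurableSpace Ω]

lemma measurable_precomp (f : κ → τ) : Measurable fun x : τ → Ω ↦ x ∘ f :=
  measurable_pi_lambda _ fun j ↦ measurable_pi_apply (f j)

lemma map_comp_eq_map_comp_of_exchangeable [Finite κ] {μ : Measure (τ → Ω)}
    (hμ : ∀ σ : Equiv.Perm τ, μ.map (fun x ↦ x ∘ σ) = μ) {f g : κ → τ}
    (hf : f.Injective) (hg : g.Injective) :
    μ.map (fun x ↦ x ∘ f) = μ.map (fun x ↦ x ∘ g) := by
  obtain ⟨σ, hσ⟩ := Equiv.Perm.exists_extending_pair g f hg hf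
  calc μ.map (fun x ↦ x ∘ f) = (μ.map fun x ↦ x ∘ σ).map (fun x ↦ x ∘ g) := by
        rw [Measure.map_map (measurable_precomp g) (measurable_precomp σ)]
        congr 1
        ext x j
        simp [hσ]
    _ = μ.map (fun x ↦ x ∘ g) := by rw [hμ σ]

variable [Fintype κ] [Fintype τ]

lemma pi_const_map_comp (ν : Measure Ω) [IsProbabilityMeasure ν] {f : κ → τ} (hf : f.Injective) :
    (Measure.pi fun _ : τ ↦ ν).map (fun x ↦ x ∘ f) = Measure.pi fun _ : κ ↦ ν := by
  simp_rw [← Measure.infinitePi_eq_pi]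
  exact Measure.map_infinitePi_infinitePi_of_inj (P := fun _ ↦ ν) hf

theorem card_mul_klDiv_map_comp_le_of_exchangeable [Fintype ι] {μ : Measure (τ → Ω)}
    [IsProbabilityMeasure μ] (hμ : ∀ σ : Equiv.Perm τ, μ.map (fun x ↦ x ∘ σ) = μ)
    (ν : Measure Ω) [IsProbabilityMeasure ν] {f : ι × κ → τ} (hf : f.Injective)
    {g : κ → τ} (hg : g.Injective) :
    Fintype.card ι * klDiv (μ.map fun x ↦ x ∘ g) (Measure.pi fun _ ↦ ν) ≤
      klDiv μ (Measure.pi fun _ ↦ ν) := by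
  let block (i : ι) : κ → τ := fun j ↦ f (i, j)
  have h_block (i : ι) : (block i).Injective := hf.comp (Prod.mk_right_injective i)
  have h_indep : iIndepFun (fun i (x : τ → Ω) ↦ x ∘ block i) (Measure.pi fun _ ↦ ν) :=
    iIndepFun_curry (X := fun p (x : τ → Ω) ↦ x (f p)) (fun p ↦ measurable_pi_apply (f p))
      ((iIndepFun_pi (X := fun _ ↦ id) fun _ ↦ aemeasurable_id).precomp hf)
  calc Fintype.card ι * klDiv (μ.map fun x ↦ x ∘ g) (Measure.pi fun _ ↦ ν)
      = ∑ i, klDiv (μ.map fun x ↦ x ∘ block i)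
          ((Measure.pi fun _ ↦ ν).map fun x ↦ x ∘ block i) := by
        simp [map_comp_eq_map_comp_of_exchangeable hμ (h_block _) hg,
          pi_const_map_comp ν (h_block _)]
    _ ≤ klDiv μ (Measure.pi fun _ ↦ ν) :=
        sum_klDiv_map_le_of_iIndepFun (fun i ↦ measurable_precomp (block i)) h_indep _

end Exchangeable

theorem stmt_13_general {Ω : Type*} [MeasurableSpace Ω] {N k m : ℕ} (hmk : m * k ≤ N) (hkN : k ≤ N)
    (P : Measure (Fin N → Ω)) [IsProbabilityMeasure P]
    (hsym : ∀ σ : Equiv.Perm (Fin N), P.map (fun x => x ∘ σ) = P)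
    (Q : Measure Ω) [IsProbabilityMeasure Q] :
    (m : EReal) *
        relEntropy (P.map fun (x : Fin N → Ω) (i : Fin k) => x (Fin.castLE hkN i))
          (Measure.pi fun _ : Fin k => Q) ≤
      relEntropy P (Measure.pi fun _ : Fin N => Q) := by
  have := Measure.isProbabilityMeasure_map (μ := P)
    (measurable_precomp (Fin.castLE hkN)).aemeasurable
  have h_klDiv := card_mul_klDiv_map_comp_le_of_exchangeable hsym Q
    ((Fin.castLE_injective hmk).comp finProdFinEquiv.injective) (Fin.castLE_injective hkN)
  rw [Fintype.card_fin] at h_klDiv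
  have h_cast : (m : EReal) = ((m : ℝ≥0∞) : EReal) := rfl
  change _ * relEntropy (P.map fun x ↦ x ∘ Fin.castLE hkN) _ ≤ _
  rw [relEntropy_eq_coe_klDiv (by simp), relEntropy_eq_coe_klDiv (by simp),
    h_cast, ← EReal.coe_ennreal_mul]
  exact EReal.coe_ennreal_le_coe_ennreal_iff.mpr h_klDiv

/-- **Key step in the proof of Theorem 7.2.**  For a permutation-invariant probability
measure `ℙ` on `Ω^N` (`Ω` Polish) and a reference probability measure `ℚ` on `Ω`, the
marginal `ℙ^{(k)}` of `ℙ` on the first `k` coordinates satisfies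
`⌊N/k⌋ · ℋ(ℙ^{(k)} | ℚ^{⊗k}) ≤ ℋ(ℙ | ℚ^{⊗N})`. -/
theorem stmt_13 {Ω : Type*}
    [TopologicalSpace Ω] [PolishSpace Ω] [MeasurableSpace Ω] [BorelSpace Ω]
    (N k : ℕ) (hk : 1 ≤ k) (hkN : k ≤ N)
    (P : Measure (Fin N → Ω)) [IsProbabilityMeasure P]
    (hsym : ∀ σ : Equiv.Perm (Fin N), P.map (fun x => x ∘ σ) = P)
    (Q : Measure Ω) [IsProbabilityMeasure Q] :
    ((N / k : ℕ) : EReal) *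
        relEntropy (P.map fun (x : Fin N → Ω) (i : Fin k) => x (Fin.castLE hkN i))
          (Measure.pi fun _ : Fin k => Q) ≤
      relEntropy P (Measure.pi fun _ : Fin N => Q) :=
  stmt_13_general (Nat.div_mul_le_self N k) hkN P hsym Q
end

section
/- Let Ω be a separable Banach space with its Borel σ-algebra, let P and Q be Borel probability measures on Ω, and let 1 ≤ p < k be real numbers with finite moments M_k(P) := ∫ ‖x‖^k dP(x) < ∞ and M_k(Q) := ∫ ‖x‖^k dQ(x) < ∞. Then there exists a Borel probability measure π on Ω × Ω with first marginal P and second marginal Q such that ( ∫ ‖x−y‖^p dπ(x,y) )^{1/p} ≤ 2^{1−1/p} · (M_k(P) + M_k(Q))^{1/k} · ( 2·d_{TV}(P,Q) )^{(k−p)/(kp)}. -/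
open MeasureTheory

/-- The total variation distance between two measures:
`d_TV(P,Q) = sup_A |P(A) − Q(A)|` over measurable sets `A`. -/
noncomputable def tvDist {Ω : Type*} [MeasurableSpace Ω] (P Q : Measure Ω) : ℝ :=
  sSup {d : ℝ | ∃ A : Set Ω, MeasurableSet A ∧ d = |(P A).toReal - (Q A).toReal|}

/-!
Write `μ = m + (μ - ν)` and `ν = m + (ν - μ)`, where `m` is the common part of the two measures and
the truncated differences are the two halves of the Jordan decomposition of the signed difference.
Coupling `m` with itself on the diagonal costs nothing, so the whole transport cost is paid by the
two remainders. These are dominated by `μ` and `ν`, which bounds their moments, and each of them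
has mass at most `tvDist μ ν`; Hölder's inequality trades the `k`-th moment for this small mass.
-/

open scoped ENNReal

section TotalVariation

variable {Ω : Type*} [MeasurableSpace Ω] (μ ν : Measure Ω)

lemma tvDist_comm : tvDist μ ν = tvDist ν μ := by
  simp only [tvDist, abs_sub_comm]

variable [IsFiniteMeasure μ] [IsFiniteMeasure ν]

lemma abs_measureReal_sub_measureReal_le_tvDist {A : Set Ω} (hA : MeasurableSet A) :
    |μ.real A - ν.real A| ≤ tvDist μ ν := by
  refine le_csSup ⟨max (μ.real Set.univ) (ν.real Set.univ), ?_⟩ ⟨A, hA, rfl⟩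
  rintro _ ⟨B, -, rfl⟩
  exact abs_sub_le_of_nonneg_of_le measureReal_nonneg
    (le_max_of_le_left (measureReal_mono B.subset_univ)) measureReal_nonneg
    (le_max_of_le_right (measureReal_mono B.subset_univ))

lemma tvDist_nonneg : 0 ≤ tvDist μ ν :=
  (abs_nonneg _).trans (abs_measureReal_sub_measureReal_le_tvDist μ ν MeasurableSet.empty)

end TotalVariation

section MeasureDifference

variable {Ω : Type*} [MeasurableSpace Ω] (μ ν : Measure Ω)

/-- The common part `μ ⊓ ν` of two finite measures, written as a difference. -/
noncomputable def commonPart : Measure Ω :=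
  μ - (μ - ν)

variable [IsFiniteMeasure μ]

lemma commonPart_add_sub_left : commonPart μ ν + (μ - ν) = μ :=
  Measure.sub_add_cancel_of_le Measure.sub_le

variable [IsFiniteMeasure ν]

lemma measure_sub_add_comm : μ - ν + ν = ν - μ + μ := by
  rw [← Measure.toSignedMeasure_eq_toSignedMeasure_iff, Measure.toSignedMeasure_add,
    Measure.toSignedMeasure_add, add_comm (ν - μ).toSignedMeasure, ← sub_eq_sub_iff_add_eq_add]
  exact Measure.sub_toSignedMeasure_eq_toSignedMeasure_sub.symm

lemma commonPart_add_sub_right : commonPart μ ν + (ν - μ) = ν := by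
  rw [← Measure.add_left_inj (μ - ν), add_right_comm, commonPart_add_sub_left, add_comm,
    ← measure_sub_add_comm, add_comm]

variable {μ ν} in
lemma measure_sub_apply_univ_comm (hmass : μ Set.univ = ν Set.univ) :
    (μ - ν) Set.univ = (ν - μ) Set.univ := by
  have h := congrArg (· Set.univ) (measure_sub_add_comm μ ν)
  simp only [Measure.add_apply, hmass] at h
  exact (ENNReal.add_left_inj (measure_ne_top ν _)).1 h

lemma measureReal_sub_univ_le_tvDist : (μ - ν).real Set.univ ≤ tvDist μ ν := by
  obtain ⟨s, hs⟩ := exists_isHahnDecomposition μ ν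
  have hs_zero : (μ - ν).real s = 0 := by
    simp [measureReal_def, Measure.sub_apply_eq_zero_of_isHahnDecomposition hs]
  have hsc_zero : (ν - μ).real sᶜ = 0 := by
    simp [measureReal_def, Measure.sub_apply_eq_zero_of_isHahnDecomposition hs.compl]
  have hsc : (μ - ν).real sᶜ + ν.real sᶜ = μ.real sᶜ := by
    rw [← measureReal_add_apply, measure_sub_add_comm, measureReal_add_apply, hsc_zero, zero_add]
  calc (μ - ν).real Set.univ = μ.real sᶜ - ν.real sᶜ := by
        rw [← measureReal_add_measureReal_compl hs.measurableSet, hs_zero]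
        linarith
    _ ≤ |μ.real sᶜ - ν.real sᶜ| := le_abs_self _
    _ ≤ tvDist μ ν := abs_measureReal_sub_measureReal_le_tvDist μ ν hs.measurableSet.compl

lemma measure_sub_add_sub_univ_le_tvDist :
    (μ - ν + (ν - μ)) Set.univ ≤ ENNReal.ofReal (2 * tvDist μ ν) := by
  rw [← ofReal_measureReal, measureReal_add_apply, two_mul]
  gcongr
  · exact measureReal_sub_univ_le_tvDist μ ν
  · exact tvDist_comm μ ν ▸ measureReal_sub_univ_le_tvDist ν μ

end MeasureDifference

section Coupling

variable {Ω : Type*} [MeasurableSpace Ω] (μ ν : Measure Ω)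

/-- The product coupling of two measures of the same finite total mass: the product measure, which
has the square of that mass, divided by the mass. It is `0` when both measures vanish. -/
noncomputable def productCoupling : Measure (Ω × Ω) :=
  (μ Set.univ)⁻¹ • μ.prod ν

/-- The maximal coupling of two finite measures of equal mass: it leaves their common part in
place and couples the two remainders by the product coupling. -/
noncomputable def maximalCoupling : Measure (Ω × Ω) :=
  (commonPart μ ν).map (fun x => (x, x)) + productCoupling (μ - ν) (ν - μ)

lemma lintegral_maximalCoupling_of_diag_eq_zero {c : Ω × Ω → ℝ≥0∞} (hc : Measurable c)
    (hdiag : ∀ x, c (x, x) = 0) :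
    ∫⁻ z, c z ∂maximalCoupling μ ν = ∫⁻ z, c z ∂productCoupling (μ - ν) (ν - μ) := by
  rw [maximalCoupling, lintegral_add_measure, lintegral_map hc (by fun_prop)]
  simp only [hdiag, lintegral_zero, zero_add]

variable {μ ν}

lemma inv_smul_measure_univ_smul [IsFiniteMeasure μ] (h : μ Set.univ = ν Set.univ) :
    (ν Set.univ)⁻¹ • ν Set.univ • μ = μ := by
  rcases eq_or_ne μ 0 with rfl | hμ
  · simp only [smul_zero]
  · rw [← h, smul_smul, ENNReal.inv_mul_cancel (Measure.measure_univ_ne_zero.2 hμ)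
      (measure_ne_top _ _), one_smul]

lemma map_fst_productCoupling [IsFiniteMeasure μ] [SFinite ν] (h : μ Set.univ = ν Set.univ) :
    (productCoupling μ ν).map Prod.fst = μ := by
  rw [productCoupling, Measure.map_smul, Measure.map_fst_prod, h, inv_smul_measure_univ_smul h]

lemma map_snd_productCoupling [IsFiniteMeasure ν] (h : μ Set.univ = ν Set.univ) :
    (productCoupling μ ν).map Prod.snd = ν := by
  rw [productCoupling, Measure.map_smul, Measure.map_snd_prod, inv_smul_measure_univ_smul h.symm]

variable [IsFiniteMeasure μ] [IsFiniteMeasure ν]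

lemma map_fst_maximalCoupling (hmass : μ Set.univ = ν Set.univ) :
    (maximalCoupling μ ν).map Prod.fst = μ := by
  rw [maximalCoupling, Measure.map_add _ _ measurable_fst,
    map_fst_productCoupling (measure_sub_apply_univ_comm hmass),
    Measure.map_map measurable_fst (by fun_prop)]
  simpa only [Function.comp_def, Measure.map_id'] using commonPart_add_sub_left μ ν

lemma map_snd_maximalCoupling (hmass : μ Set.univ = ν Set.univ) :
    (maximalCoupling μ ν).map Prod.snd = ν := by
  rw [maximalCoupling, Measure.map_add _ _ measurable_snd,
    map_snd_productCoupling (measure_sub_apply_univ_comm hmass),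
    Measure.map_map measurable_snd (by fun_prop)]
  simpa only [Function.comp_def, Measure.map_id'] using commonPart_add_sub_right μ ν

end Coupling

lemma lintegral_rpow_le_lintegral_rpow_mul_measure_univ {α : Type*} [MeasurableSpace α]
    {μ : Measure α} {f : α → ℝ≥0∞} (hf : AEMeasurable f μ) {p q : ℝ} (hp : 0 < p) (hpq : p ≤ q) :
    (∫⁻ a, f a ^ p ∂μ) ^ (1 / p) ≤
      (∫⁻ a, f a ^ q ∂μ) ^ (1 / q) * μ Set.univ ^ (1 / p - 1 / q) := by
  simpa only [eLpNorm', enorm_eq_self] using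
    eLpNorm'_le_eLpNorm'_mul_rpow_measure_univ hp hpq hf.aestronglyMeasurable

section TransportCost

variable {Ω : Type*} [PseudoEMetricSpace Ω] [MeasurableSpace Ω] [OpensMeasurableSpace Ω]

lemma lintegral_edist_rpow_le_lintegral_marginals (γ : Measure (Ω × Ω)) (x₀ : Ω) {p : ℝ}
    (hp : 1 ≤ p) :
    ∫⁻ z, edist z.1 z.2 ^ p ∂γ ≤
      2 ^ (p - 1) * ∫⁻ x, edist x x₀ ^ p ∂(γ.map Prod.fst + γ.map Prod.snd) := by
  have hmeas : Measurable fun x => edist x x₀ ^ p := by fun_prop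
  calc ∫⁻ z, edist z.1 z.2 ^ p ∂γ
      ≤ ∫⁻ z, 2 ^ (p - 1) * (edist z.1 x₀ ^ p + edist z.2 x₀ ^ p) ∂γ := by
        refine lintegral_mono fun z => ?_
        exact (ENNReal.rpow_le_rpow (edist_triangle_right _ _ x₀) (by linarith)).trans
          (ENNReal.rpow_add_le_mul_rpow_add_rpow _ _ hp)
    _ = 2 ^ (p - 1) * ∫⁻ x, edist x x₀ ^ p ∂(γ.map Prod.fst + γ.map Prod.snd) := by
        rw [lintegral_const_mul _ (by fun_prop), lintegral_add_left (by fun_prop),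
          lintegral_add_measure, lintegral_map hmeas measurable_fst,
          lintegral_map hmeas measurable_snd]

lemma lintegral_edist_rpow_rpow_le_moment_mul_mass (γ : Measure (Ω × Ω)) (x₀ : Ω) {p k : ℝ}
    (hp : 1 ≤ p) (hpk : p ≤ k) :
    (∫⁻ z, edist z.1 z.2 ^ p ∂γ) ^ (1 / p) ≤
      2 ^ (1 - 1 / p) *
        (∫⁻ x, edist x x₀ ^ k ∂(γ.map Prod.fst + γ.map Prod.snd)) ^ (1 / k) *
        (γ.map Prod.fst + γ.map Prod.snd) Set.univ ^ (1 / p - 1 / k) := by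
  have hp_pos : 0 < p := by linarith
  set ρ := γ.map Prod.fst + γ.map Prod.snd
  calc (∫⁻ z, edist z.1 z.2 ^ p ∂γ) ^ (1 / p)
      ≤ (2 ^ (p - 1) * ∫⁻ x, edist x x₀ ^ p ∂ρ) ^ (1 / p) := by
        gcongr
        exact lintegral_edist_rpow_le_lintegral_marginals γ x₀ hp
    _ = 2 ^ (1 - 1 / p) * (∫⁻ x, edist x x₀ ^ p ∂ρ) ^ (1 / p) := by
        rw [ENNReal.mul_rpow_of_nonneg _ _ (by positivity), ← ENNReal.rpow_mul, sub_mul,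
          mul_one_div_cancel hp_pos.ne', one_mul]
    _ ≤ 2 ^ (1 - 1 / p) *
          ((∫⁻ x, edist x x₀ ^ k ∂ρ) ^ (1 / k) * ρ Set.univ ^ (1 / p - 1 / k)) := by
        gcongr
        exact lintegral_rpow_le_lintegral_rpow_mul_measure_univ (by fun_prop) hp_pos hpk
    _ = _ := (mul_assoc _ _ _).symm

lemma lintegral_edist_rpow_maximalCoupling_le [SecondCountableTopology Ω] {μ ν : Measure Ω}
    [IsFiniteMeasure μ] [IsFiniteMeasure ν] (hmass : μ Set.univ = ν Set.univ) (x₀ : Ω) {p k : ℝ}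
    (hp : 1 ≤ p) (hpk : p ≤ k) :
    (∫⁻ z, edist z.1 z.2 ^ p ∂maximalCoupling μ ν) ^ (1 / p) ≤
      2 ^ (1 - 1 / p) * (∫⁻ x, edist x x₀ ^ k ∂(μ + ν)) ^ (1 / k) *
        ENNReal.ofReal (2 * tvDist μ ν) ^ (1 / p - 1 / k) := by
  have hp_pos : 0 < p := by linarith
  have hk_pos : 0 < k := by linarith
  have hexp : 0 ≤ 1 / p - 1 / k := sub_nonneg.2 (one_div_le_one_div_of_le hp_pos hpk)
  have hmass_sub := measure_sub_apply_univ_comm hmass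
  have hcost := lintegral_edist_rpow_rpow_le_moment_mul_mass
    (productCoupling (μ - ν) (ν - μ)) x₀ hp hpk
  rw [map_fst_productCoupling hmass_sub, map_snd_productCoupling hmass_sub] at hcost
  rw [lintegral_maximalCoupling_of_diag_eq_zero μ ν (by fun_prop)
    fun x => by rw [edist_self, ENNReal.zero_rpow_of_pos hp_pos]]
  refine hcost.trans ?_
  gcongr
  · exact Measure.sub_le
  · exact Measure.sub_le
  · exact measure_sub_add_sub_univ_le_tvDist μ ν

end TransportCost

section DistPower

variable {Ω : Type*} [PseudoMetricSpace Ω]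

lemma ofReal_dist_rpow (x y : Ω) {r : ℝ} (hr : 0 ≤ r) :
    ENNReal.ofReal (dist x y ^ r) = edist x y ^ r := by
  rw [← ENNReal.ofReal_rpow_of_nonneg dist_nonneg hr, edist_dist]

variable [SecondCountableTopology Ω] [MeasurableSpace Ω] [OpensMeasurableSpace Ω]
  {α : Type*} [MeasurableSpace α] {μ : Measure α} {f g : α → Ω} {r : ℝ}

lemma integrable_dist_rpow_iff (hf : Measurable f) (hg : Measurable g) (hr : 0 ≤ r) :
    Integrable (fun a => dist (f a) (g a) ^ r) μ ↔ ∫⁻ a, edist (f a) (g a) ^ r ∂μ ≠ ∞ := by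
  have hmeas : Measurable fun a => dist (f a) (g a) ^ r := by fun_prop
  rw [← lintegral_ofReal_ne_top_iff_integrable hmeas.aestronglyMeasurable
    (ae_of_all _ fun a => by positivity)]
  simp only [ofReal_dist_rpow _ _ hr]

lemma integral_dist_rpow_eq_toReal_lintegral (hf : Measurable f) (hg : Measurable g)
    (hr : 0 ≤ r) :
    ∫ a, dist (f a) (g a) ^ r ∂μ = (∫⁻ a, edist (f a) (g a) ^ r ∂μ).toReal := by
  have hmeas : Measurable fun a => dist (f a) (g a) ^ r := by fun_prop
  rw [integral_eq_lintegral_of_nonneg_ae (ae_of_all _ fun a => by positivity)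
    hmeas.aestronglyMeasurable]
  simp only [ofReal_dist_rpow _ _ hr]

end DistPower

theorem stmt_14_general {Ω : Type*} [PseudoMetricSpace Ω] [SecondCountableTopology Ω]
    [MeasurableSpace Ω] [OpensMeasurableSpace Ω] (μ ν : Measure Ω) [IsFiniteMeasure μ]
    [IsFiniteMeasure ν] (hmass : μ Set.univ = ν Set.univ) (x₀ : Ω) {p k : ℝ} (hp : 1 ≤ p)
    (hpk : p ≤ k) (hμ : Integrable (fun x => dist x x₀ ^ k) μ)
    (hν : Integrable (fun x => dist x x₀ ^ k) ν) :
    ∃ π : Measure (Ω × Ω), π.map Prod.fst = μ ∧ π.map Prod.snd = ν ∧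
      Integrable (fun z : Ω × Ω => dist z.1 z.2 ^ p) π ∧
      (∫ z : Ω × Ω, dist z.1 z.2 ^ p ∂π) ^ (1 / p) ≤
        2 ^ (1 - 1 / p) *
          ((∫ x, dist x x₀ ^ k ∂μ) + ∫ x, dist x x₀ ^ k ∂ν) ^ (1 / k) *
          (2 * tvDist μ ν) ^ ((k - p) / (k * p)) := by
  have hp_pos : 0 < p := by linarith
  have hk_pos : 0 < k := by linarith
  have hexp : 1 / p - 1 / k = (k - p) / (k * p) := by field_simp
  have hexp_nonneg : 0 ≤ (k - p) / (k * p) := div_nonneg (by linarith) (by positivity)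
  have hmoment : ∫⁻ x, edist x x₀ ^ k ∂(μ + ν) ≠ ∞ :=
    (integrable_dist_rpow_iff measurable_id measurable_const hk_pos.le).1 (hμ.add_measure hν)
  have hle := lintegral_edist_rpow_maximalCoupling_le hmass x₀ hp hpk
  rw [hexp] at hle
  have hbound_ne_top : 2 ^ (1 - 1 / p) * (∫⁻ x, edist x x₀ ^ k ∂(μ + ν)) ^ (1 / k) *
      ENNReal.ofReal (2 * tvDist μ ν) ^ ((k - p) / (k * p)) ≠ ∞ := by
    finiteness
  have hcost_ne_top : ∫⁻ z, edist z.1 z.2 ^ p ∂maximalCoupling μ ν ≠ ∞ := fun htop =>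
    ne_top_of_le_ne_top hbound_ne_top hle
      (by rw [htop, ENNReal.top_rpow_of_pos (by positivity)])
  refine ⟨maximalCoupling μ ν, map_fst_maximalCoupling hmass, map_snd_maximalCoupling hmass,
    (integrable_dist_rpow_iff measurable_fst measurable_snd hp_pos.le).2 hcost_ne_top, ?_⟩
  rw [← integral_add_measure hμ hν,
    integral_dist_rpow_eq_toReal_lintegral measurable_fst measurable_snd hp_pos.le,
    integral_dist_rpow_eq_toReal_lintegral measurable_id' measurable_const hk_pos.le]
  simpa only [ENNReal.toReal_mul, ← ENNReal.toReal_rpow, ENNReal.toReal_ofNat,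
    ENNReal.toReal_ofReal (mul_nonneg zero_le_two (tvDist_nonneg μ ν))]
    using ENNReal.toReal_mono hbound_ne_top hle

/-- **Corollary 7.6 (coupling form of the moment/total-variation interpolation bound).**
On a separable Banach space, for probability measures `P, Q` with finite `k`-th moments and
`1 ≤ p < k`, there is a coupling `π` of `P` and `Q` with
`(∫ ‖x−y‖^p dπ)^{1/p} ≤ 2^{1−1/p} (M_k(P)+M_k(Q))^{1/k} (2 d_TV(P,Q))^{(k−p)/(kp)}`. -/
theorem stmt_14 {Ω : Type*} [NormedAddCommGroup Ω] [NormedSpace ℝ Ω] [CompleteSpace Ω]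
    [TopologicalSpace.SeparableSpace Ω] [MeasurableSpace Ω] [BorelSpace Ω]
    (P Q : Measure Ω) [IsProbabilityMeasure P] [IsProbabilityMeasure Q]
    (p k : ℝ) (hp : 1 ≤ p) (hpk : p < k)
    (hMP : Integrable (fun x => ‖x‖ ^ k) P)
    (hMQ : Integrable (fun x => ‖x‖ ^ k) Q) :
    ∃ π : Measure (Ω × Ω), IsProbabilityMeasure π ∧
      π.map Prod.fst = P ∧ π.map Prod.snd = Q ∧
      Integrable (fun z : Ω × Ω => ‖z.1 - z.2‖ ^ p) π ∧
      (∫ z : Ω × Ω, ‖z.1 - z.2‖ ^ p ∂π) ^ (1 / p) ≤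
        2 ^ (1 - 1 / p) *
          ((∫ x, ‖x‖ ^ k ∂P) + ∫ x, ‖x‖ ^ k ∂Q) ^ (1 / k) *
          (2 * tvDist P Q) ^ ((k - p) / (k * p)) := by
  have : SecondCountableTopology Ω := UniformSpace.secondCountable_of_separable Ω
  obtain ⟨π, hπP, hπQ, hint, hle⟩ := stmt_14_general P Q (by simp only [measure_univ]) 0 hp hpk.le
    (by simpa only [dist_zero_right] using hMP) (by simpa only [dist_zero_right] using hMQ)
  have : IsProbabilityMeasure (π.map Prod.fst) := hπP ▸ inferInstance
  refine ⟨π, Measure.isProbabilityMeasure_of_map Prod.fst, hπP, hπQ, ?_, ?_⟩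
  · simpa only [dist_eq_norm] using hint
  · simpa only [dist_eq_norm, sub_zero] using hle
end
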